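/- Let X be an ℕ-valued random variable with E[(1+δ)^X] < ∞ for some δ > 0 that is infinitely dilatable. Then its FCGF C(t) = log E[(1+t)^X] is convex on the interior of its effective domain {t > -1 : E[(1+t)^X] < ∞}, and it is strictly convex unless X is Poisson distributed (including the degenerate case X ≡ 0), in which case C(t) = μt for some μ ≥ 0. -/

import Mathlib

/-!
Convexity of the factorial cumulant generating function of an infinitely dilatable variable.

If `X_c` denotes the dilation of `X` by `c`, then `E[(1+t)^X] = E[(1+t/c)^{X_c}]`. Substituting
`1 + t/c = e^{x/c}` shows that `x ↦ C(c(e^{x/c} - 1))` is the logarithmic moment generating function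
of `X_c / c`, hence convex (`log_mgf_convex`). As `c → ∞` the change of variables
`x ↦ c(e^{x/c} - 1)` tends to the identity, and a pointwise limit of convex functions is convex
(`convexOn_fcgf`).

The hypothesis gives this identity only for `t` near `0`. Expanding at `1`, it says that the `j`-th
factorial moment of `X_c` is `c^j` times that of `X`. All terms being nonnegative, Tonelli's theorem
transfers convergence of the generating function of `X` at `1 + t` to that of `X_c` at `1 + t/c`,
and the identity theorem for analytic functions gives equality on the interior of the domain
(`dilation_global`). The point mass at `0` is treated apart, since for it the conventions for
divergent series and for `log 0` hide a possible divergence of the generating function of `X_c`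
(`dilation_near_zero`).

If `C` is convex but not strictly convex, it coincides with one of its chords on an interval, hence
by analyticity it is affine on the whole interior, hence linear since `C(0) = 0`
(`linear_of_not_strict`). Then `E[s^X] = e^{μ(s-1)}`, and comparing power series at `s = 0`
identifies the Poisson law (`poisson_of_linear`).
-/

/-- The factorial cumulant generating function `C(t) = log E[(1+t)^X]` of the pmf `p`. -/
noncomputable def fcgf (p : ℕ → ℝ) (t : ℝ) : ℝ := Real.log (∑' k : ℕ, p k * (1 + t) ^ k)

/-- The Poisson pmf with mean `μ` (for `μ = 0` this is the point mass at `0`). -/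
noncomputable def poissonPMF (μ : ℝ) (k : ℕ) : ℝ := Real.exp (-μ) * μ ^ k / (Nat.factorial k)

/-- The effective domain `{t > -1 : E[(1+t)^X] < ∞}` of the FCGF of the pmf `p`. -/
def fcgfDomain (p : ℕ → ℝ) : Set ℝ :=
  {t : ℝ | -1 < t ∧ Summable (fun k : ℕ => p k * (1 + t) ^ k)}

open Filter Topology

/-! ### Generating functions and power series -/

/-- The probability generating function `E[s^X]` of the pmf `p`, with value `0` where the series
diverges. -/
noncomputable def pgf (p : ℕ → ℝ) (s : ℝ) : ℝ := ∑' k : ℕ, p k * s ^ k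

/-- The `j`-th normalized factorial moment `E[X(X-1)⋯(X-j+1)] / j!` of the pmf `p`, with value `0`
where it is infinite. -/
noncomputable def binomMoment (p : ℕ → ℝ) (j : ℕ) : ℝ := ∑' k : ℕ, p k * (k.choose j : ℝ)

lemma fcgf_eq (p : ℕ → ℝ) (t : ℝ) : fcgf p t = Real.log (pgf p (1 + t)) := rfl

lemma summable_mono {p : ℕ → ℝ} (hp0 : ∀ k, 0 ≤ p k) {s r : ℝ} (hs : |s| ≤ r)
    (h : Summable (fun k => p k * r ^ k)) : Summable (fun k => p k * s ^ k) := by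
  refine Summable.of_norm_bounded h fun k => ?_
  rw [Real.norm_eq_abs, abs_mul, abs_of_nonneg (hp0 k), abs_pow]
  exact mul_le_mul_of_nonneg_left (pow_le_pow_left₀ (abs_nonneg _) hs k) (hp0 k)

lemma pgf_pos {p : ℕ → ℝ} (hp0 : ∀ k, 0 ≤ p k) (hp1 : HasSum p 1) {s : ℝ} (hs : 0 < s)
    (h : Summable (fun k => p k * s ^ k)) : 0 < pgf p s := by
  have hk : ∃ k, p k ≠ 0 := by
    by_contra! hk
    have : p = fun _ => 0 := funext hk
    rw [this] at hp1
    exact zero_ne_one (hasSum_zero.unique hp1)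
  obtain ⟨k, hk⟩ := hk
  have hpk : 0 < p k := lt_of_le_of_ne (hp0 k) (Ne.symm hk)
  exact h.tsum_pos (fun i => mul_nonneg (hp0 i) (pow_nonneg hs.le i)) k
    (mul_pos hpk (pow_pos hs k))

lemma pgf_one {p : ℕ → ℝ} (hp1 : HasSum p 1) : pgf p 1 = 1 := by
  simpa [pgf] using hp1.tsum_eq

lemma analyticAt_pgf {p : ℕ → ℝ} (hp0 : ∀ k, 0 ≤ p k) {s r : ℝ} (hs : |s| < r)
    (h : Summable (fun k => p k * r ^ k)) : AnalyticAt ℝ (pgf p) s := by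
  have hr : 0 < r := (abs_nonneg s).trans_lt hs
  lift r to NNReal using hr.le
  set P := FormalMultilinearSeries.ofScalars ℝ p with hP
  have hrad : (r : ENNReal) ≤ P.radius := by
    apply FormalMultilinearSeries.le_radius_of_summable
    refine h.congr fun k => ?_
    rw [hP, FormalMultilinearSeries.ofScalars_norm, Real.norm_eq_abs, abs_of_nonneg (hp0 k)]
  have hpos : 0 < P.radius := lt_of_lt_of_le (by exact_mod_cast hr) hrad
  have hsum : P.sum = pgf p := by
    have := FormalMultilinearSeries.ofScalarsSum_eq_tsum (E := ℝ) p
    rw [FormalMultilinearSeries.ofScalarsSum] at this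
    rw [hP, this]
    rfl
  have := P.hasFPowerSeriesOnBall hpos
  rw [hsum] at this
  refine this.analyticAt_of_mem ?_
  rw [Metric.mem_eball, edist_zero_right]
  refine lt_of_lt_of_le ?_ hrad
  rw [enorm_eq_nnnorm]
  exact ENNReal.coe_lt_coe.2 (NNReal.coe_lt_coe.1 (by simpa using hs))

/-- Uniqueness of power series coefficients. -/
lemma coeff_unique {a b : ℕ → ℝ} {f : ℝ → ℝ}
    (ha : ∀ᶠ t in 𝓝 (0 : ℝ), HasSum (fun j => a j * t ^ j) (f t))
    (hb : ∀ᶠ t in 𝓝 (0 : ℝ), HasSum (fun j => b j * t ^ j) (f t)) (j : ℕ) : a j = b j := by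
  have key : ∀ c : ℕ → ℝ, (∀ᶠ t in 𝓝 (0 : ℝ), HasSum (fun j => c j * t ^ j) (f t)) →
      HasFPowerSeriesAt f (FormalMultilinearSeries.ofScalars ℝ c) 0 := by
    intro c hc
    rw [hasFPowerSeriesAt_iff]
    filter_upwards [hc] with t ht
    simpa [FormalMultilinearSeries.coeff_ofScalars, mul_comm] using ht
  have h := congrArg (fun q : FormalMultilinearSeries ℝ ℝ ℝ => q.coeff j)
    ((key a ha).eq_formalMultilinearSeries (key b hb))
  simpa [FormalMultilinearSeries.coeff_ofScalars] using h

/-! ### Factorial moments -/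

lemma hasSum_binom (x u : ℝ) (k : ℕ) :
    HasSum (fun j => x * (k.choose j : ℝ) * u ^ j) (x * (1 + u) ^ k) := by
  have h : x * (1 + u) ^ k = ∑ j ∈ Finset.range (k + 1), x * (k.choose j : ℝ) * u ^ j := by
    rw [add_comm, add_pow, Finset.mul_sum]
    refine Finset.sum_congr rfl fun j _ => ?_
    simp; ring
  rw [h]
  refine hasSum_sum_of_ne_finset_zero fun j hj => ?_
  have : k < j := by simpa using hj
  simp [Nat.choose_eq_zero_of_lt this]

/-- By Tonelli, finiteness of `E[(1+u)^X]` amounts to summability of the double series obtained by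
binomial expansion. -/
lemma summable_prod_iff {p : ℕ → ℝ} (hp0 : ∀ k, 0 ≤ p k) {u : ℝ} (hu : 0 ≤ u) :
    Summable (fun z : ℕ × ℕ => p z.1 * (z.1.choose z.2 : ℝ) * u ^ z.2) ↔
      Summable (fun k => p k * (1 + u) ^ k) := by
  rw [summable_prod_of_nonneg
    (fun z => mul_nonneg (mul_nonneg (hp0 _) (Nat.cast_nonneg _)) (pow_nonneg hu _))]
  simp only [(hasSum_binom _ _ _).tsum_eq]
  exact and_iff_right fun k => (hasSum_binom _ _ _).summable

/-- Factorial moments are finite as soon as the generating function is finite beyond `1`. -/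
lemma summable_moment {p : ℕ → ℝ} (hp0 : ∀ k, 0 ≤ p k) {u : ℝ} (hu : 0 < u)
    (h : Summable (fun k => p k * (1 + u) ^ k)) (j : ℕ) :
    Summable (fun k => p k * (k.choose j : ℝ)) := by
  have h1 := ((summable_prod_iff hp0 hu.le).2 h).prod_symm.prod_factor j
  have h2 := h1.mul_right ((u ^ j)⁻¹)
  refine h2.congr fun k => ?_
  have : u ^ j ≠ 0 := (pow_pos hu j).ne'
  simp only [Prod.swap]
  field_simp

/-- Expansion of the generating function at `1` in factorial moments. -/
lemma hasSum_pgf_expansion {p : ℕ → ℝ} (hp0 : ∀ k, 0 ≤ p k) {u t : ℝ} (hu : 0 < u) (ht : |t| ≤ u)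
    (h : Summable (fun k => p k * (1 + u) ^ k)) :
    HasSum (fun j => binomMoment p j * t ^ j) (pgf p (1 + t)) := by
  have h1 : Summable (fun z : ℕ × ℕ => p z.1 * (z.1.choose z.2 : ℝ) * t ^ z.2) := by
    refine Summable.of_norm_bounded ((summable_prod_iff hp0 hu.le).2 h) fun z => ?_
    have h0 : 0 ≤ p z.1 * (z.1.choose z.2 : ℝ) := mul_nonneg (hp0 _) (Nat.cast_nonneg _)
    rw [Real.norm_eq_abs, abs_mul, abs_of_nonneg h0, abs_pow]
    exact mul_le_mul_of_nonneg_left (pow_le_pow_left₀ (abs_nonneg _) ht _) h0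
  have h2 : pgf p (1 + t) = ∑' z : ℕ × ℕ, p z.1 * (z.1.choose z.2 : ℝ) * t ^ z.2 :=
    (h1.hasSum.prod_fiberwise fun k => hasSum_binom (p k) t k).tsum_eq
  have h3 : HasSum (fun z : ℕ × ℕ => p z.2 * (z.2.choose z.1 : ℝ) * t ^ z.1) (pgf p (1 + t)) := by
    rw [h2]
    exact (Equiv.prodComm ℕ ℕ).hasSum_iff.2 h1.hasSum
  exact h3.prod_fiberwise fun j => (summable_moment hp0 hu h j).hasSum.mul_right _

/-- The converse expansion: by Tonelli, summability of the factorial moment series at `u ≥ 0`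
forces `E[(1+u)^X] < ∞`. -/
lemma summable_of_moments {p : ℕ → ℝ} (hp0 : ∀ k, 0 ≤ p k) {u : ℝ} (hu : 0 ≤ u)
    (hm : ∀ j, Summable (fun k => p k * (k.choose j : ℝ)))
    (h : Summable (fun j => binomMoment p j * u ^ j)) :
    Summable (fun k => p k * (1 + u) ^ k) := by
  rw [← summable_prod_iff hp0 hu]
  have : Summable (fun z : ℕ × ℕ => p z.2 * (z.2.choose z.1 : ℝ) * u ^ z.1) := by
    rw [summable_prod_of_nonneg
      (fun z => mul_nonneg (mul_nonneg (hp0 _) (Nat.cast_nonneg _)) (pow_nonneg hu _))]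
    refine ⟨fun j => (hm j).mul_right (u ^ j), h.congr fun j => ?_⟩
    rw [binomMoment, ← tsum_mul_right]
  exact this.prod_symm

/-! ### Dilations near zero -/

/-- The dilation hypothesis in terms of generating functions, freed of the values that `log` and
`∑'` take on divergent series. -/
lemma dilation_near_zero {p : ℕ → ℝ} (hp0 : ∀ k, 0 ≤ p k) (hp1 : HasSum p 1)
    {δ : ℝ} (hδ : 0 < δ) (hmom : Summable (fun k : ℕ => p k * (1 + δ) ^ k))
    {c : ℝ} (hc : 0 < c)
    (hdil : ∃ q : ℕ → ℝ, (∀ k, 0 ≤ q k) ∧ HasSum q 1 ∧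
        ∃ ε > 0, ∀ t : ℝ, |t| < ε → fcgf q t = fcgf p (c * t)) :
    ∃ q : ℕ → ℝ, (∀ k, 0 ≤ q k) ∧ HasSum q 1 ∧ ∃ ε > 0, Summable (fun k => q k * (1 + ε) ^ k) ∧
      ∀ t : ℝ, |t| < ε → pgf q (1 + t) = pgf p (1 + c * t) := by
  by_cases htriv : ∀ k, k ≠ 0 → p k = 0
  · -- For `X ≡ 0` the given `q` might diverge beyond `1`, where the junk value `log 0 = 0` agrees
    -- with `C = 0`; the point mass itself is its own dilation.
    have hsum : ∀ s : ℝ, HasSum (fun k => p k * s ^ k) (p 0) := fun s => by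
      simpa using hasSum_single (f := fun k => p k * s ^ k) 0 fun k hk => by simp [htriv k hk]
    refine ⟨p, hp0, hp1, 1, one_pos, (hsum _).summable, fun t _ => ?_⟩
    rw [pgf, pgf, (hsum _).tsum_eq, (hsum _).tsum_eq]
  push Not at htriv
  obtain ⟨k₀, hk₀, hpk₀⟩ := htriv
  obtain ⟨q, hq0, hq1, ε, hε, hq⟩ := hdil
  obtain ⟨η, hη, hη1⟩ := exists_between
    (lt_min hε (lt_min (div_pos hδ hc) (lt_min one_pos (one_div_pos.2 hc))))
  simp only [lt_min_iff] at hη1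
  obtain ⟨hηε, hηδ, hη1, hηc⟩ := hη1
  rw [lt_div_iff₀ hc, mul_comm] at hηδ hηc
  have hpsum : ∀ t, |t| ≤ η → Summable (fun k => p k * (1 + c * t) ^ k) := fun t ht => by
    refine summable_mono hp0 ?_ hmom
    have : |c * t| ≤ c * η := by rw [abs_mul, abs_of_pos hc]; gcongr
    rw [abs_le] at this ⊢
    constructor <;> linarith
  have hsumη : Summable (fun k => q k * (1 + η) ^ k) := by
    by_contra hns
    have h1 := hq η (by rwa [abs_of_pos hη])
    have h2 : 1 < pgf p (1 + c * η) := by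
      have hone := hp1.tsum_eq
      have hcη := mul_pos hc hη
      refine hone.symm.trans_lt (Summable.tsum_lt_tsum (i := k₀) (fun k => ?_) ?_ hp1.summable
        (hpsum η (abs_of_pos hη).le))
      · exact le_mul_of_one_le_right (hp0 k) (one_le_pow₀ (by linarith))
      · exact lt_mul_of_one_lt_right (lt_of_le_of_ne (hp0 _) (Ne.symm hpk₀))
          (one_lt_pow₀ (by linarith) hk₀)
    rw [fcgf, tsum_eq_zero_of_not_summable hns, Real.log_zero, fcgf_eq] at h1
    exact (Real.log_pos h2).ne h1
  refine ⟨q, hq0, hq1, η, hη, hsumη, fun t ht => ?_⟩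
  have h1 := hq t (ht.trans hηε)
  have hct : |c * t| < 1 := by
    rw [abs_mul, abs_of_pos hc]
    exact (mul_lt_mul_of_pos_left ht hc).trans hηc
  rw [abs_lt] at hct
  have ht' := abs_lt.1 ht
  refine Real.log_injOn_pos ?_ ?_ h1
  · refine pgf_pos hq0 hq1 (by linarith) (summable_mono hq0 ?_ hsumη)
    rw [abs_le]; constructor <;> linarith
  · exact pgf_pos hp0 hp1 (by linarith) (hpsum t ht.le)

/-! ### Dilations on the whole domain -/

/-- A dilation of `X` by `c ≥ 1` reproduces the generating function of `X` on the whole interior of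
the domain. Dilation multiplies the `j`-th factorial moment by `c ^ j`, which by Tonelli gives
convergence to the right of `0`; equality then spreads by the identity theorem. -/
lemma dilation_global {p : ℕ → ℝ} (hp0 : ∀ k, 0 ≤ p k) (hp1 : HasSum p 1)
    {δ : ℝ} (hδ : 0 < δ) (hmom : Summable (fun k : ℕ => p k * (1 + δ) ^ k))
    {c : ℝ} (hc : 1 ≤ c)
    (hdil : ∃ q : ℕ → ℝ, (∀ k, 0 ≤ q k) ∧ HasSum q 1 ∧
        ∃ ε > 0, ∀ t : ℝ, |t| < ε → fcgf q t = fcgf p (c * t)) :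
    ∃ q : ℕ → ℝ, (∀ k, 0 ≤ q k) ∧ HasSum q 1 ∧ ∀ t r : ℝ, -1 < t → t < r → 0 < r →
      Summable (fun k => p k * (1 + r) ^ k) →
      Summable (fun k => q k * (1 + t / c) ^ k) ∧ pgf q (1 + t / c) = pgf p (1 + t) := by
  have hc0 : 0 < c := by linarith
  obtain ⟨q, hq0, hq1, ε, hε, hqs, hq⟩ := dilation_near_zero hp0 hp1 hδ hmom hc0 hdil
  refine ⟨q, hq0, hq1, fun t r ht htr hr hpr => ?_⟩
  have hcoef : ∀ j, binomMoment q j = binomMoment p j * c ^ j := by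
    refine coeff_unique (f := fun t => pgf q (1 + t)) ?_ ?_
    · filter_upwards [Metric.ball_mem_nhds (0 : ℝ) hε] with x hx
      rw [mem_ball_zero_iff, Real.norm_eq_abs] at hx
      exact hasSum_pgf_expansion hq0 hε hx.le hqs
    · filter_upwards [Metric.ball_mem_nhds (0 : ℝ) hε,
        Metric.ball_mem_nhds (0 : ℝ) (div_pos hδ hc0)] with x hx hx'
      rw [mem_ball_zero_iff, Real.norm_eq_abs] at hx hx'
      rw [hq x hx]
      have : |c * x| ≤ δ := by
        rw [abs_mul, abs_of_pos hc0, mul_comm]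
        exact ((lt_div_iff₀ hc0).1 hx').le
      refine (hasSum_pgf_expansion hp0 hδ this hmom).congr_fun fun j => ?_
      ring
  have hrc : 0 < r / c := div_pos hr hc0
  have hqr : Summable (fun k => q k * (1 + r / c) ^ k) := by
    refine summable_of_moments hq0 hrc.le (summable_moment hq0 hε hqs) ?_
    refine (hasSum_pgf_expansion hp0 hr (abs_of_pos hr).le hpr).summable.congr fun j => ?_
    rw [hcoef, div_pow]
    field_simp
  have hqabs : ∀ x, -1 < x → x < r → |1 + x / c| < 1 + r / c := fun x hx hxr => by
    have h1 : x / c < r / c := by gcongr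
    have h2 : -1 < x / c := by rw [lt_div_iff₀ hc0]; linarith
    rw [abs_lt]; constructor <;> linarith
  refine ⟨summable_mono hq0 (hqabs t ht htr).le hqr, ?_⟩
  have hf : AnalyticOnNhd ℝ (fun x => pgf q (1 + x / c)) (Set.Ioo (-1) r) := fun x hx => by
    have h1 : AnalyticAt ℝ (pgf q) (1 + x / c) := analyticAt_pgf hq0 (hqabs x hx.1 hx.2) hqr
    have h2 : AnalyticAt ℝ (fun x : ℝ => 1 + x / c) x := by fun_prop (disch := exact hc0.ne')
    exact AnalyticAt.fun_comp (g := pgf q) (f := fun x : ℝ => 1 + x / c) h1 h2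
  have hg : AnalyticOnNhd ℝ (fun x => pgf p (1 + x)) (Set.Ioo (-1) r) := fun x hx => by
    have h1 : AnalyticAt ℝ (pgf p) (1 + x) := analyticAt_pgf hp0
      (by rw [abs_lt]; constructor <;> linarith [hx.1, hx.2]) hpr
    have h2 : AnalyticAt ℝ (fun x : ℝ => 1 + x) x := by fun_prop
    exact h1.fun_comp h2
  refine hf.eqOn_of_preconnected_of_eventuallyEq hg isPreconnected_Ioo (z₀ := 0)
    ⟨by norm_num, hr⟩ ?_ ⟨ht, htr⟩
  filter_upwards [Metric.ball_mem_nhds (0 : ℝ) (mul_pos hc0 hε)] with x hx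
  rw [mem_ball_zero_iff, Real.norm_eq_abs] at hx
  rw [hq (x / c) (by rw [abs_div, abs_of_pos hc0, div_lt_iff₀ hc0]; linarith)]
  congr 2
  field_simp

/-! ### Convexity -/

/-- The logarithm of a moment generating function is convex (Hölder's inequality). -/
lemma log_mgf_convex {q : ℕ → ℝ} (hq0 : ∀ k, 0 ≤ q k) (hq1 : HasSum q 1) {x y a b : ℝ}
    (ha : 0 ≤ a) (hb : 0 ≤ b) (hab : a + b = 1)
    (hx : Summable (fun k => q k * Real.exp x ^ k))
    (hy : Summable (fun k => q k * Real.exp y ^ k))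
    (hz : Summable (fun k => q k * Real.exp (a * x + b * y) ^ k)) :
    Real.log (pgf q (Real.exp (a * x + b * y))) ≤
      a * Real.log (pgf q (Real.exp x)) + b * Real.log (pgf q (Real.exp y)) := by
  have px := pgf_pos hq0 hq1 (Real.exp_pos x) hx
  have py := pgf_pos hq0 hq1 (Real.exp_pos y) hy
  have pz := pgf_pos hq0 hq1 (Real.exp_pos _) hz
  set A := Real.log (pgf q (Real.exp x)) with hA
  set B := Real.log (pgf q (Real.exp y)) with hB
  have eA : Real.exp (-A) * pgf q (Real.exp x) = 1 := by
    rw [hA, Real.exp_neg, Real.exp_log px, inv_mul_cancel₀ px.ne']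
  have eB : Real.exp (-B) * pgf q (Real.exp y) = 1 := by
    rw [hB, Real.exp_neg, Real.exp_log py, inv_mul_cancel₀ py.ne']
  have hterm : ∀ k : ℕ, Real.exp (-(a * A + b * B)) * (q k * Real.exp (a * x + b * y) ^ k) ≤
      a * (Real.exp (-A) * (q k * Real.exp x ^ k)) +
        b * (Real.exp (-B) * (q k * Real.exp y ^ k)) := by
    intro k
    have h := convexOn_exp.2 (Set.mem_univ (k * x - A)) (Set.mem_univ (k * y - B)) ha hb hab
    simp only [smul_eq_mul] at h
    have h' := mul_le_mul_of_nonneg_left h (hq0 k)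
    have e1 : Real.exp (a * (k * x - A) + b * (k * y - B)) =
        Real.exp (-(a * A + b * B)) * Real.exp (a * x + b * y) ^ k := by
      rw [← Real.exp_nat_mul, ← Real.exp_add]; congr 1; ring
    have e2 : Real.exp (k * x - A) = Real.exp (-A) * Real.exp x ^ k := by
      rw [← Real.exp_nat_mul, ← Real.exp_add]; congr 1; ring
    have e3 : Real.exp (k * y - B) = Real.exp (-B) * Real.exp y ^ k := by
      rw [← Real.exp_nat_mul, ← Real.exp_add]; congr 1; ring
    rw [e1, e2, e3] at h'
    linarith
  have hle := hasSum_le hterm (hz.hasSum.mul_left _)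
    (((hx.hasSum.mul_left (Real.exp (-A))).mul_left a).add
      ((hy.hasSum.mul_left (Real.exp (-B))).mul_left b))
  change Real.exp (-(a * A + b * B)) * pgf q _ ≤
    a * (Real.exp (-A) * pgf q _) + b * (Real.exp (-B) * pgf q _) at hle
  rw [eA, eB, mul_one, mul_one, hab, Real.exp_neg, inv_mul_le_iff₀ (Real.exp_pos _), mul_one]
    at hle
  rwa [Real.log_le_iff_le_exp pz]

lemma mem_interior_domain {p : ℕ → ℝ} (hp0 : ∀ k, 0 ≤ p k) {t : ℝ} :
    t ∈ interior (fcgfDomain p) ↔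
      -1 < t ∧ ∃ r, t < r ∧ Summable (fun k => p k * (1 + r) ^ k) := by
  constructor
  · intro ht
    refine ⟨(interior_subset ht).1, ?_⟩
    have h1 : ∀ᶠ r in 𝓝[>] t, r ∈ fcgfDomain p :=
      nhdsWithin_le_nhds (mem_interior_iff_mem_nhds.1 ht)
    obtain ⟨r, hr, hr'⟩ := (h1.and self_mem_nhdsWithin).exists
    exact ⟨r, hr', hr.2⟩
  · rintro ⟨h1, r, h2, h3⟩
    refine mem_interior.2 ⟨Set.Ioo (-1) r, fun x hx => ⟨hx.1, ?_⟩, isOpen_Ioo, h1, h2⟩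
    refine summable_mono hp0 ?_ h3
    rw [abs_le]; constructor <;> linarith [hx.1, hx.2]

/-- In the interior of the domain the endpoint of convergence may be taken positive. -/
lemma exists_pos_radius {p : ℕ → ℝ} (hp0 : ∀ k, 0 ≤ p k)
    {δ : ℝ} (hδ : 0 < δ) (hmom : Summable (fun k : ℕ => p k * (1 + δ) ^ k))
    {t : ℝ} (ht : t ∈ interior (fcgfDomain p)) :
    -1 < t ∧ ∃ r, t < r ∧ 0 < r ∧ Summable (fun k => p k * (1 + r) ^ k) := by
  obtain ⟨h1, r, h2, h3⟩ := (mem_interior_domain hp0).1 ht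
  refine ⟨h1, ?_⟩
  rcases le_or_gt r 0 with h | h
  · exact ⟨δ, by linarith, hδ, hmom⟩
  · exact ⟨r, h2, h, h3⟩

lemma convex_domain {p : ℕ → ℝ} (hp0 : ∀ k, 0 ≤ p k) :
    Convex ℝ (interior (fcgfDomain p)) := by
  refine Set.OrdConnected.convex ⟨fun x hx y hy z hz => ?_⟩
  obtain ⟨-, r, h2, h3⟩ := (mem_interior_domain hp0).1 hy
  exact (mem_interior_domain hp0).2
    ⟨((mem_interior_domain hp0).1 hx).1.trans_le hz.1, r, hz.2.trans_lt h2, h3⟩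

lemma analyticOnNhd_fcgf {p : ℕ → ℝ} (hp0 : ∀ k, 0 ≤ p k) (hp1 : HasSum p 1) :
    AnalyticOnNhd ℝ (fcgf p) (interior (fcgfDomain p)) := by
  intro t ht
  obtain ⟨h1, r, h2, h3⟩ := (mem_interior_domain hp0).1 ht
  have ha : AnalyticAt ℝ (pgf p) (1 + t) := analyticAt_pgf hp0
    (by rw [abs_lt]; constructor <;> linarith) h3
  have hb : AnalyticAt ℝ (fun x : ℝ => 1 + x) t := by fun_prop
  exact (ha.fun_comp hb).log (pgf_pos hp0 hp1 (by linarith) (interior_subset ht).2)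

/-- The change of variables taking `C` to a logarithmic moment generating function tends to the
identity as the dilation factor grows. -/
lemma tendsto_dilation (x : ℝ) :
    Tendsto (fun c : ℝ => c * (Real.exp (x / c) - 1)) atTop (𝓝 x) := by
  have h : HasDerivAt (fun u : ℝ => Real.exp (x * u)) x 0 := by
    have h1 : HasDerivAt (fun u : ℝ => x * u) x 0 := by
      simpa using (hasDerivAt_id (0 : ℝ)).const_mul x
    simpa using h1.exp
  have h2 := h.tendsto_slope.comp
    (tendsto_inv_atTop_nhdsGT_zero.mono_right (nhdsWithin_mono _ fun u hu => ne_of_gt hu))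
  refine h2.congr fun c => ?_
  simp [slope_def_field, div_eq_mul_inv, mul_comm]

lemma convexOn_fcgf {p : ℕ → ℝ} (hp0 : ∀ k, 0 ≤ p k) (hp1 : HasSum p 1)
    {δ : ℝ} (hδ : 0 < δ) (hmom : Summable (fun k : ℕ => p k * (1 + δ) ^ k))
    (hdil : ∀ c : ℝ, 0 < c → ∃ q : ℕ → ℝ, (∀ k, 0 ≤ q k) ∧ HasSum q 1 ∧
        ∃ ε > 0, ∀ t : ℝ, |t| < ε → fcgf q t = fcgf p (c * t)) :
    ConvexOn ℝ (interior (fcgfDomain p)) (fcgf p) := by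
  refine ⟨convex_domain hp0, fun x hx y hy a b ha hb hab => ?_⟩
  have hz := convex_domain hp0 hx hy ha hb hab
  simp only [smul_eq_mul] at hz ⊢
  have hlim : ∀ w ∈ interior (fcgfDomain p),
      Tendsto (fun c : ℝ => fcgf p (c * (Real.exp (w / c) - 1))) atTop (𝓝 (fcgf p w)) :=
    fun w hw => ((analyticOnNhd_fcgf hp0 hp1 w hw).continuousAt.tendsto).comp (tendsto_dilation w)
  have hmem : ∀ w ∈ interior (fcgfDomain p),
      ∀ᶠ c : ℝ in atTop, c * (Real.exp (w / c) - 1) ∈ interior (fcgfDomain p) :=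
    fun w hw => (tendsto_dilation w).eventually (isOpen_interior.mem_nhds hw)
  refine le_of_tendsto_of_tendsto (hlim _ hz)
    (((hlim x hx).const_mul a).add ((hlim y hy).const_mul b)) ?_
  filter_upwards [hmem x hx, hmem y hy, hmem _ hz, eventually_ge_atTop (1 : ℝ)]
    with c hcx hcy hcz hc
  have hc0 : 0 < c := by linarith
  obtain ⟨q, hq0, hq1, hq⟩ := dilation_global hp0 hp1 hδ hmom hc (hdil c hc0)
  have key : ∀ w, c * (Real.exp (w / c) - 1) ∈ interior (fcgfDomain p) →
      Summable (fun k => q k * Real.exp (w / c) ^ k) ∧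
      fcgf p (c * (Real.exp (w / c) - 1)) = Real.log (pgf q (Real.exp (w / c))) := by
    intro w hw
    obtain ⟨h1, r, h2, h3, h4⟩ := exists_pos_radius hp0 hδ hmom hw
    obtain ⟨h5, h6⟩ := hq _ r h1 h2 h3 h4
    have e : 1 + c * (Real.exp (w / c) - 1) / c = Real.exp (w / c) := by
      field_simp; ring
    rw [e] at h5 h6
    exact ⟨h5, by rw [fcgf_eq, h6]⟩
  obtain ⟨sx, ex⟩ := key x hcx
  obtain ⟨sy, ey⟩ := key y hcy
  obtain ⟨sz, ez⟩ := key _ hcz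
  have e : (a * x + b * y) / c = a * (x / c) + b * (y / c) := by ring
  rw [ex, ey, ez]
  rw [e] at sz ⊢
  exact log_mgf_convex hq0 hq1 ha hb hab sx sy sz

/-! ### The equality case -/

/-- A convex function meeting one of its chords at an interior point coincides with that chord
throughout. -/
lemma eq_chord_of_convexOn {s : Set ℝ} {f : ℝ → ℝ} (hf : ConvexOn ℝ s f) {x y z : ℝ}
    (hx : x ∈ s) (hy : y ∈ s) (hxz : x < z) (hzy : z < y) {m d : ℝ}
    (hfx : f x = m * x + d) (hfy : f y = m * y + d) (hfz : m * z + d ≤ f z)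
    {w : ℝ} (hw : w ∈ Set.Ioo x y) : f w = m * w + d := by
  have hws : w ∈ s := hf.1.ordConnected.out hx hy ⟨hw.1.le, hw.2.le⟩
  have slope : ∀ u v t, u ∈ s → v ∈ s → u < t → t < v →
      (v - u) * f t ≤ (v - t) * f u + (t - u) * f v := fun u v t hu hv hut htv => by
    have := hf.slope_mono_adjacent hu hv hut htv
    rw [div_le_div_iff₀ (by linarith) (by linarith)] at this
    linarith
  have hle : f w ≤ m * w + d := by
    have := slope x y w hx hy hw.1 hw.2
    rw [hfx, hfy] at this
    have h' : (y - x) * f w ≤ (y - x) * (m * w + d) := by linarith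
    exact le_of_mul_le_mul_left h' (by linarith [hw.1, hw.2])
  refine le_antisymm hle ?_
  rcases lt_trichotomy w z with h | h | h
  · have := slope w y z hws hy h hzy
    rw [hfy] at this
    have h1 : (y - w) * (m * z + d) ≤ (y - w) * f z :=
      mul_le_mul_of_nonneg_left hfz (by linarith)
    have h' : (y - z) * (m * w + d) ≤ (y - z) * f w := by linarith
    exact le_of_mul_le_mul_left h' (by linarith)
  · rwa [h]
  · have := slope x w z hx hws hxz h
    rw [hfx] at this
    have h1 : (w - x) * (m * z + d) ≤ (w - x) * f z :=
      mul_le_mul_of_nonneg_left hfz (by linarith)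
    have h' : (z - x) * (m * w + d) ≤ (z - x) * f w := by linarith
    exact le_of_mul_le_mul_left h' (by linarith)

/-- If `C` fails to be strictly convex, it agrees with a chord, hence by analyticity is linear. -/
lemma linear_of_not_strict {p : ℕ → ℝ} (hp0 : ∀ k, 0 ≤ p k) (hp1 : HasSum p 1)
    {δ : ℝ} (hδ : 0 < δ) (hmom : Summable (fun k : ℕ => p k * (1 + δ) ^ k))
    (hconv : ConvexOn ℝ (interior (fcgfDomain p)) (fcgf p))
    (hns : ¬ StrictConvexOn ℝ (interior (fcgfDomain p)) (fcgf p)) :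
    ∃ m : ℝ, ∀ t ∈ interior (fcgfDomain p), fcgf p t = m * t := by
  have h : ∃ x y z : ℝ, x ∈ interior (fcgfDomain p) ∧ y ∈ interior (fcgfDomain p) ∧
      x < z ∧ z < y ∧ (y - z) * fcgf p x + (z - x) * fcgf p y ≤ (y - x) * fcgf p z := by
    by_contra! hcon
    refine hns (strictConvexOn_of_slope_strict_mono_adjacent hconv.1 ?_)
    intro x y z hx hz hxy hyz
    rw [div_lt_div_iff₀ (by linarith) (by linarith)]
    have := hcon x z y hx hz hxy hyz
    linarith
  obtain ⟨x, y, z, hx, hy, hxz, hzy, hle⟩ := h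
  have hyx : 0 < y - x := by linarith
  set m := (fcgf p y - fcgf p x) / (y - x) with hm
  have hmul : m * (y - x) = fcgf p y - fcgf p x := div_mul_cancel₀ _ hyx.ne'
  set d := fcgf p x - m * x with hd
  have hz : m * z + d ≤ fcgf p z := by
    refine le_of_mul_le_mul_left ?_ hyx
    have : (y - x) * (m * z + d) = (y - x) * fcgf p x + (z - x) * (m * (y - x)) := by
      rw [hd]; ring
    rw [this, hmul]
    linarith
  have hw : ∀ w ∈ Set.Ioo x y, fcgf p w = m * w + d := fun w hw =>
    eq_chord_of_convexOn hconv hx hy hxz hzy (by rw [hd]; ring)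
      (by rw [hd]; linarith) hz hw
  have haff : AnalyticOnNhd ℝ (fun t : ℝ => m * t + d) (interior (fcgfDomain p)) :=
    fun t _ => by fun_prop
  have heq : Set.EqOn (fcgf p) (fun t => m * t + d) (interior (fcgfDomain p)) := by
    refine (analyticOnNhd_fcgf hp0 hp1).eqOn_of_preconnected_of_eventuallyEq haff
      hconv.1.isPreconnected (z₀ := z) ?_ ?_
    · exact hconv.1.ordConnected.out hx hy ⟨hxz.le, hzy.le⟩
    · filter_upwards [isOpen_Ioo.mem_nhds (show z ∈ Set.Ioo x y from ⟨hxz, hzy⟩)] with w hw'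
      exact hw w hw'
  have h0 := heq ((mem_interior_domain hp0).2 ⟨by norm_num, δ, hδ, hmom⟩ :
    (0 : ℝ) ∈ interior (fcgfDomain p))
  have hC0 : fcgf p 0 = 0 := by rw [fcgf_eq, add_zero, pgf_one hp1, Real.log_one]
  have hd0 : d = 0 := by simpa [hC0] using h0.symm
  refine ⟨m, fun t ht => ?_⟩
  have := heq ht
  simpa [hd0] using this

/-- A linear FCGF is that of a Poisson law, by comparing power series at `s = 0`. -/
lemma poisson_of_linear {p : ℕ → ℝ} (hp0 : ∀ k, 0 ≤ p k) (hp1 : HasSum p 1)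
    {δ : ℝ} (hδ : 0 < δ) (hmom : Summable (fun k : ℕ => p k * (1 + δ) ^ k)) {m : ℝ}
    (h : ∀ t ∈ interior (fcgfDomain p), fcgf p t = m * t) (k : ℕ) : p k = poissonPMF m k := by
  have hr : 0 < 1 + δ := by linarith
  have habs : ∀ s ∈ Set.Ioo (-(1 + δ)) (1 + δ), |s| < 1 + δ := fun s hs => abs_lt.2 hs
  have heq : Set.EqOn (pgf p) (fun s => Real.exp (m * (s - 1)))
      (Set.Ioo (-(1 + δ)) (1 + δ)) := by
    refine AnalyticOnNhd.eqOn_of_preconnected_of_eventuallyEq (𝕜 := ℝ) (z₀ := 1)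
      (fun s hs => analyticAt_pgf hp0 (habs s hs) hmom) (fun s _ => by fun_prop)
      isPreconnected_Ioo ⟨by linarith, by linarith⟩ ?_
    filter_upwards [isOpen_Ioo.mem_nhds
      (show (1 : ℝ) ∈ Set.Ioo 0 (1 + δ) from ⟨one_pos, by linarith⟩)] with s hs
    have ht : s - 1 ∈ interior (fcgfDomain p) :=
      (mem_interior_domain hp0).2 ⟨by linarith [hs.1], δ, by linarith [hs.2], hmom⟩
    have h1 := h _ ht
    have h2 := (interior_subset ht).2
    rw [fcgf_eq] at h1
    rw [add_sub_cancel] at h1 h2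
    rw [← h1, Real.exp_log (pgf_pos hp0 hp1 hs.1 h2)]
  have hmem : Set.Ioo (-(1 + δ)) (1 + δ) ∈ 𝓝 (0 : ℝ) :=
    isOpen_Ioo.mem_nhds ⟨by linarith, hr⟩
  refine coeff_unique (f := pgf p) ?_ ?_ k
  · filter_upwards [hmem] with s hs
    exact (summable_mono hp0 (habs s hs).le hmom).hasSum
  · filter_upwards [hmem] with s hs
    have h1 := (NormedSpace.expSeries_div_hasSum_exp (m * s)).mul_left (Real.exp (-m))
    rw [← Real.exp_eq_exp_ℝ, ← Real.exp_add] at h1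
    rw [heq hs]
    have e : m * (s - 1) = -m + m * s := by ring
    simp only [e]
    refine h1.congr_fun fun j => ?_
    rw [poissonPMF, mul_pow]; ring

/-- **Convexity of the FCGF of an infinitely dilatable random variable.**
Let `X` be `ℕ`-valued with pmf `p`, `E[(1+δ)^X] < ∞` for some `δ > 0`, and infinitely
dilatable. Then the FCGF `C` is convex on the interior of its effective domain, and it is
strictly convex unless `X` is Poisson distributed (including the degenerate case `X ≡ 0`),
in which case `C(t) = μt` for some `μ ≥ 0`. -/
theorem fcgf_convex_of_infinitely_dilatable
    (p : ℕ → ℝ) (hp0 : ∀ k, 0 ≤ p k) (hp1 : HasSum p 1)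
    (δ : ℝ) (hδ : 0 < δ) (hmom : Summable (fun k : ℕ => p k * (1 + δ) ^ k))
    (hdil : ∀ c : ℝ, 0 < c → ∃ q : ℕ → ℝ, (∀ k, 0 ≤ q k) ∧ HasSum q 1 ∧
        ∃ ε > 0, ∀ t : ℝ, |t| < ε → fcgf q t = fcgf p (c * t)) :
    ConvexOn ℝ (interior (fcgfDomain p)) (fcgf p) ∧
    (StrictConvexOn ℝ (interior (fcgfDomain p)) (fcgf p) ∨
      ∃ μ : ℝ, 0 ≤ μ ∧ (∀ k, p k = poissonPMF μ k) ∧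
        ∀ t ∈ interior (fcgfDomain p), fcgf p t = μ * t) := by
  have hconv := convexOn_fcgf hp0 hp1 hδ hmom hdil
  refine ⟨hconv, or_iff_not_imp_left.2 fun hns => ?_⟩
  obtain ⟨m, hm⟩ := linear_of_not_strict hp0 hp1 hδ hmom hconv hns
  have hpois := poisson_of_linear hp0 hp1 hδ hmom hm
  refine ⟨m, ?_, hpois, hm⟩
  -- `p 1 = e^{-m} m` carries the sign of `m`.
  have h1 := hp0 1
  rw [hpois 1] at h1
  simpa [poissonPMF, Real.exp_pos] using h1
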